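/- arXiv:0811.3496 — 2 statements merged into one kernel-verified Lean document; each statement's English description precedes it below -/
import Mathlib

section
/- Let Γ = [γ_ij] ∈ ℝ^{p×p} be a connected interconnection and let Q : ℝ≥0 → Q̄_n be persistently exciting. Then the solutions x_i : ℝ≥0 → ℝ^n of the array ẋ_i(t) = Q_t Σ_{j≠i} γ_ij (x_j(t) − x_i(t)), i = 1,…,p, exponentially synchronize to the constant trajectory x̄(t) ≡ (r^T ⊗ I_n) x(0), where x(0) stacks x_1(0),…,x_p(0) and r ∈ ℝ^p satisfies r^T Γ = 0 and r^T 1 = 1; that is, there exist c, α > 0 with max_i |x_i(t) − x̄(t)| ≤ c e^{−α t} for all t ≥ 0. -/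
open Matrix MeasureTheory Filter
open scoped Kronecker

noncomputable section

/-- Euclidean norm of a vector. -/
def eunorm {ι : Type*} [Fintype ι] (v : ι → ℝ) : ℝ := Real.sqrt (∑ i, v i ^ 2)

/-- Spectral (induced 2-) norm of a matrix. -/
def specNorm {m n : Type*} [Fintype m] [Fintype n] (M : Matrix m n ℝ) : ℝ :=
  sSup {c : ℝ | ∃ v : n → ℝ, eunorm v ≤ 1 ∧ c = eunorm (M.mulVec v)}

/-- Smallest singular value of a matrix. -/
def sigmaMin {m n : Type*} [Fintype m] [Fintype n] (M : Matrix m n ℝ) : ℝ :=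
  sInf {c : ℝ | ∃ v : n → ℝ, eunorm v = 1 ∧ c = eunorm (M.mulVec v)}

/-- Largest singular value of a matrix. -/
def sigmaMax {m n : Type*} [Fintype m] [Fintype n] (M : Matrix m n ℝ) : ℝ :=
  sSup {c : ℝ | ∃ v : n → ℝ, eunorm v = 1 ∧ c = eunorm (M.mulVec v)}

/-- A continuous-time interconnection matrix. -/
def IsInterconnection {p : ℕ} (Γ : Matrix (Fin p) (Fin p) ℝ) : Prop :=
  (∀ i j, i ≠ j → 0 ≤ Γ i j) ∧
  ∀ i, Γ i i = -∑ j ∈ Finset.univ.filter (fun j => j ≠ i), Γ i j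

/-- Connectedness of the graph of a matrix. -/
def ConnectedMat {p : ℕ} (Γ : Matrix (Fin p) (Fin p) ℝ) : Prop :=
  ∃ v : Fin p, ∀ u : Fin p, Relation.ReflTransGen (fun i j => 0 < Γ i j) u v

/-- Membership in `Q̄_n`: symmetric positive semidefinite with spectral norm at most 1. -/
def InQbar {n : ℕ} (R : Matrix (Fin n) (Fin n) ℝ) : Prop :=
  R.PosSemidef ∧ specNorm R ≤ 1

/-- `δ(ε, T) = min{ε/2, ε³/(240 T⁵)}`. -/
def deltaCT (ε T : ℝ) : ℝ := min (ε / 2) (ε ^ 3 / (240 * T ^ 5))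

/-- Sufficient excitation for `Q : ℝ≥0 → Q_n`. -/
def SuffExcitingCT {n : ℕ} (Q : ℝ → Matrix (Fin n) (Fin n) ℝ) : Prop :=
  ∃ ε T : ℕ → ℝ, (∀ i, 0 < ε i) ∧ (∀ i, 0 < T i) ∧
    (∀ i, ε i ≤ sigmaMin (Matrix.of fun a b =>
      ∫ t in (∑ j ∈ Finset.range i, T j)..((∑ j ∈ Finset.range i, T j) + T i), Q t a b)) ∧
    Tendsto (fun N => ∑ i ∈ Finset.range N, deltaCT (ε i) (T i)) atTop atTop

/-- Persistence of excitation for `Q : ℝ≥0 → Q_n`. -/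
def PersExcitingCT {n : ℕ} (Q : ℝ → Matrix (Fin n) (Fin n) ℝ) : Prop :=
  ∃ ε T : ℝ, 0 < ε ∧ 0 < T ∧ ∀ t : ℝ, 0 ≤ t →
    ε ≤ sigmaMin (Matrix.of fun a b => ∫ s in t..(t + T), Q s a b)

lemma dotProduct_self_nonneg {ι : Type*} [Fintype ι] (z : ι → ℝ) : 0 ≤ z ⬝ᵥ z :=
  Finset.sum_nonneg fun i _ => mul_self_nonneg (z i)

lemma sq_le_dotProduct_self {ι : Type*} [Fintype ι] (z : ι → ℝ) (i : ι) : z i ^ 2 ≤ z ⬝ᵥ z := by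
  simpa [dotProduct, sq] using
    Finset.single_le_sum (f := fun i => z i * z i) (fun j _ => mul_self_nonneg (z j))
      (Finset.mem_univ i)

/-- A quadratic form is bounded by a multiple of the squared Euclidean norm. -/
lemma exists_dotProduct_mulVec_le {ι : Type*} [Fintype ι] (M : Matrix ι ι ℝ) :
    ∃ L : ℝ, 0 < L ∧ ∀ z : ι → ℝ, z ⬝ᵥ M *ᵥ z ≤ L * (z ⬝ᵥ z) := by
  refine ⟨1 + ∑ i, ∑ j, |M i j|, by positivity, fun z => ?_⟩
  have hz := sq_le_dotProduct_self z
  have h0 : 0 ≤ z ⬝ᵥ z := dotProduct_self_nonneg z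
  have h1 : z ⬝ᵥ M *ᵥ z ≤ (∑ i, ∑ j, |M i j|) * (z ⬝ᵥ z) := by
    have hexp : z ⬝ᵥ M *ᵥ z = ∑ i, ∑ j, z i * (M i j * z j) := by
      simp [dotProduct, mulVec, Finset.mul_sum]
    rw [hexp]
    simp only [Finset.sum_mul]
    refine Finset.sum_le_sum fun i _ => Finset.sum_le_sum fun j _ => ?_
    calc z i * (M i j * z j) = M i j * (z i * z j) := by ring
      _ ≤ |M i j| * |z i * z j| := by rw [← abs_mul]; exact le_abs_self _
      _ ≤ _ := by
        refine mul_le_mul_of_nonneg_left ?_ (abs_nonneg _)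
        rw [abs_le]
        constructor <;> nlinarith [hz i, hz j, sq_nonneg (z i + z j), sq_nonneg (z i - z j)]
  linarith

lemma mulVec_dotProduct_mulVec {ι κ : Type*} [Fintype ι] [Fintype κ] (A : Matrix ι κ ℝ)
    (z w : κ → ℝ) : (A *ᵥ z) ⬝ᵥ (A *ᵥ w) = z ⬝ᵥ (Aᵀ * A) *ᵥ w := by
  rw [← mulVec_mulVec, dotProduct_mulVec z Aᵀ, vecMul_transpose]

/-- If `0 ≤ M ≤ T` as quadratic forms then `M² ≤ T M`. -/
lemma mulVec_dotProduct_self_le {ι : Type*} [Fintype ι] {M : Matrix ι ι ℝ} (hM : M.IsSymm)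
    (h0 : ∀ u : ι → ℝ, 0 ≤ u ⬝ᵥ M *ᵥ u) {T : ℝ} (hT : 0 < T)
    (h1 : ∀ u : ι → ℝ, u ⬝ᵥ M *ᵥ u ≤ T * (u ⬝ᵥ u)) (v : ι → ℝ) :
    (M *ᵥ v) ⬝ᵥ (M *ᵥ v) ≤ T * (v ⬝ᵥ M *ᵥ v) := by
  have hs : v ⬝ᵥ M *ᵥ (M *ᵥ v) = (M *ᵥ v) ⬝ᵥ (M *ᵥ v) := by
    rw [mulVec_dotProduct_mulVec, hM.eq, mulVec_mulVec]
  have h2 := h0 (T • v - M *ᵥ v)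
  have h3 := h1 (M *ᵥ v)
  simp only [mulVec_sub, mulVec_smul, sub_dotProduct, dotProduct_sub, smul_dotProduct,
    dotProduct_smul, smul_eq_mul, hs] at h2
  have h4 : 0 ≤ T * (T * (v ⬝ᵥ M *ᵥ v) - (M *ᵥ v) ⬝ᵥ (M *ᵥ v)) := by linarith
  have := nonneg_of_mul_nonneg_right h4 hT
  linarith

/-- A row-stochastic matrix with a column bounded below by `η` shrinks intervals by `1 - η`. -/
lemma mulVec_mem_interval_of_rowStochastic {ι : Type*} [Fintype ι] [DecidableEq ι]
    {B : Matrix ι ι ℝ} (hB : B ∈ rowStochastic ℝ ι) {v : ι} {η : ℝ} (hv : ∀ i, η ≤ B i v)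
    {y : ι → ℝ} {a d : ℝ} (hy : ∀ i, a ≤ y i ∧ y i ≤ a + d) :
    ∃ a', ∀ i, a' ≤ (B *ᵥ y) i ∧ (B *ᵥ y) i ≤ a' + (1 - η) * d := by
  refine ⟨η * y v + (1 - η) * a, fun i => ?_⟩
  have hs := sum_row_of_mem_rowStochastic hB i
  have hC : ∀ k, 0 ≤ B i k - (if k = v then η else 0) := fun k => by
    split_ifs with h
    · subst h; linarith [hv i]
    · simpa using nonneg_of_mem_rowStochastic hB
  have hCs : ∑ k, (B i k - (if k = v then η else 0)) = 1 - η := by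
    rw [Finset.sum_sub_distrib, hs]; simp
  have hCy : (B *ᵥ y) i = η * y v + ∑ k, (B i k - (if k = v then η else 0)) * y k := by
    simp [mulVec, dotProduct, sub_mul, Finset.sum_sub_distrib]
  rw [hCy]
  constructor
  · rw [← hCs, Finset.sum_mul]
    gcongr with k
    · exact hC k
    · exact (hy k).1
  · rw [add_assoc, ← mul_add, ← hCs, Finset.sum_mul]
    gcongr with k
    · exact hC k
    · exact (hy k).2

/-- A stochastic matrix with positive diagonal whose graph has a globally reachable node has a
power with a positive column. -/
lemma exists_pow_column_pos {ι : Type*} [Fintype ι] [DecidableEq ι] {A : Matrix ι ι ℝ}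
    (hA : A ∈ rowStochastic ℝ ι) (hd : ∀ i, 0 < A i i) {v : ι}
    (hv : ∀ u, Relation.ReflTransGen (fun i j => 0 < A i j) u v) :
    ∃ m, 0 < m ∧ ∀ u, 0 < (A ^ m) u v := by
  have hstep : ∀ (k : ℕ) (u w : ι), 0 < A u w → 0 < (A ^ k) w v → 0 < (A ^ (k + 1)) u v := by
    intro k u w h1 h2
    rw [pow_succ', mul_apply]
    refine lt_of_lt_of_le (mul_pos h1 h2) (Finset.single_le_sum (f := fun j => A u j * (A ^ k) j v)
      (fun j _ => ?_) (Finset.mem_univ w))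
    exact mul_nonneg (nonneg_of_mem_rowStochastic hA) (nonneg_of_mem_rowStochastic (pow_mem hA k))
  have hex : ∀ u, ∃ k, 0 < (A ^ k) u v := fun u => by
    induction hv u using Relation.ReflTransGen.head_induction_on with
    | refl => exact ⟨0, by simp⟩
    | head h _ ih => exact ⟨_, hstep _ _ _ h ih.choose_spec⟩
  choose k hk using hex
  refine ⟨∑ u, k u + 1, Nat.succ_pos _, fun u => ?_⟩
  refine hstep _ u u (hd u) ?_
  exact Nat.le_induction (hk u) (fun m _ h => hstep m u u (hd u) h) _ <|
    Finset.single_le_sum (f := k) (fun _ _ => Nat.zero_le _) (Finset.mem_univ u)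

/-- Powers of a stochastic matrix with a globally reachable node contract the annihilator of an
invariant row vector of total mass one. -/
lemma exists_pow_mulVec_contraction {ι : Type*} [Fintype ι] [DecidableEq ι] {A : Matrix ι ι ℝ}
    (hA : A ∈ rowStochastic ℝ ι) (hd : ∀ i, 0 < A i i) {v : ι}
    (hv : ∀ u, Relation.ReflTransGen (fun i j => 0 < A i j) u v)
    {r : ι → ℝ} (hr : r ᵥ* A = r) (hr1 : ∑ i, r i = 1) :
    ∃ N, 0 < N ∧ ∀ z : ι → ℝ, r ⬝ᵥ z = 0 →
      (A ^ N *ᵥ z) ⬝ᵥ (A ^ N *ᵥ z) ≤ (1 / 2) * (z ⬝ᵥ z) := by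
  obtain ⟨m, hmpos, hm⟩ := exists_pow_column_pos hA hd hv
  obtain ⟨u₀, -, hu₀⟩ := Finset.exists_min_image Finset.univ (fun u => (A ^ m) u v)
    ⟨v, Finset.mem_univ v⟩
  set η := (A ^ m) u₀ v
  have hη : 0 < η := hm u₀
  have hη1 : η ≤ 1 := le_one_of_mem_rowStochastic (pow_mem hA m)
  set R := ∑ i, |r i|
  set K : ℝ := Fintype.card ι * (R * 2) ^ 2
  have hrpow : ∀ k, r ᵥ* A ^ k = r := fun k => by
    induction k with
    | zero => simp
    | succ k ih => rw [pow_succ, ← vecMul_vecMul, ih, hr]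
  have hlim : Tendsto (fun k : ℕ => K * ((1 - η) ^ 2) ^ (k + 1)) atTop (nhds (K * 0)) := by
    refine Tendsto.const_mul _ ((tendsto_add_atTop_iff_nat 1).2 ?_)
    exact tendsto_pow_atTop_nhds_zero_of_lt_one (by positivity) (by nlinarith)
  rw [mul_zero] at hlim
  obtain ⟨k, hk⟩ := (hlim.eventually (gt_mem_nhds (show (0 : ℝ) < 1 / 2 by norm_num))).exists
  have hinterval : ∀ (y : ι → ℝ) (d : ℝ), (∃ a, ∀ i, a ≤ y i ∧ y i ≤ a + d) → ∀ k : ℕ,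
      ∃ a, ∀ i, a ≤ ((A ^ m) ^ k *ᵥ y) i ∧ ((A ^ m) ^ k *ᵥ y) i ≤ a + (1 - η) ^ k * d := by
    intro y d h k
    induction k with
    | zero => simpa using h
    | succ k ih =>
      obtain ⟨a, ha⟩ := ih
      obtain ⟨a', ha'⟩ := mulVec_mem_interval_of_rowStochastic (pow_mem hA m)
        (fun i => hu₀ i (Finset.mem_univ i)) ha
      refine ⟨a', fun i => ?_⟩
      have := ha' i
      rw [mulVec_mulVec, ← pow_succ', ← mul_assoc, ← pow_succ'] at this
      exact this
  have hcontr : ∀ z : ι → ℝ, r ⬝ᵥ z = 0 → ∀ k : ℕ,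
      ((A ^ m) ^ k *ᵥ z) ⬝ᵥ ((A ^ m) ^ k *ᵥ z) ≤ K * ((1 - η) ^ 2) ^ k * (z ⬝ᵥ z) := by
    intro z hz k
    have h0 : 0 ≤ z ⬝ᵥ z := dotProduct_self_nonneg z
    set s := Real.sqrt (z ⬝ᵥ z)
    have hs : s ^ 2 = z ⬝ᵥ z := Real.sq_sqrt h0
    have hzi : ∀ i, |z i| ≤ s := fun i => Real.abs_le_sqrt (sq_le_dotProduct_self z i)
    obtain ⟨a, ha⟩ := hinterval z (2 * s) ⟨-s, fun i => by
      have := abs_le.1 (hzi i)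
      constructor <;> linarith⟩ k
    set w := (A ^ m) ^ k *ᵥ z with hw
    have hrw : r ⬝ᵥ w = 0 := by
      rw [hw, dotProduct_mulVec, ← pow_mul, hrpow, hz]
    have hwi : ∀ i, |w i| ≤ R * ((1 - η) ^ k * (2 * s)) := fun i => by
      have : w i = ∑ j, r j * (w i - w j) := by
        simp only [mul_sub, Finset.sum_sub_distrib, ← Finset.sum_mul, hr1]
        simp only [dotProduct] at hrw
        rw [hrw]; ring
      rw [this, Finset.sum_mul]
      refine (Finset.abs_sum_le_sum_abs _ _).trans (Finset.sum_le_sum fun j _ => ?_)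
      rw [abs_mul]
      refine mul_le_mul_of_nonneg_left ?_ (abs_nonneg _)
      rw [abs_le]
      constructor <;> linarith [(ha i).1, (ha i).2, (ha j).1, (ha j).2]
    calc w ⬝ᵥ w = ∑ i, |w i| ^ 2 := by simp [dotProduct, sq]
      _ ≤ ∑ _i : ι, (R * ((1 - η) ^ k * (2 * s))) ^ 2 :=
        Finset.sum_le_sum fun i _ => pow_le_pow_left₀ (abs_nonneg _) (hwi i) 2
      _ = K * ((1 - η) ^ 2) ^ k * (z ⬝ᵥ z) := by
        rw [← hs, ← pow_mul, mul_comm 2 k, pow_mul]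
        simp only [Finset.sum_const, Finset.card_univ, nsmul_eq_mul, K]
        ring
  refine ⟨m * (k + 1), by positivity, fun z hz => ?_⟩
  have h0 : 0 ≤ z ⬝ᵥ z := dotProduct_self_nonneg z
  have := hcontr z hz (k + 1)
  rw [← pow_mul] at this
  nlinarith

/-- A connected interconnection admits a quadratic Lyapunov function on the annihilator of its
normalized left null vector. -/
lemma exists_lyapunov {p : ℕ} {Γ : Matrix (Fin p) (Fin p) ℝ} (hΓ : IsInterconnection Γ)
    (hconn : ConnectedMat Γ) {r : Fin p → ℝ} (hr : r ᵥ* Γ = 0) (hr1 : ∑ i, r i = 1) :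
    ∃ P : Matrix (Fin p) (Fin p) ℝ, ∃ c : ℝ, 0 < c ∧
      (∀ z : Fin p → ℝ, z ⬝ᵥ z ≤ z ⬝ᵥ P *ᵥ z) ∧
      ∀ z : Fin p → ℝ, r ⬝ᵥ z = 0 → z ⬝ᵥ (Γᵀ * P + P * Γ) *ᵥ z ≤ -c * (z ⬝ᵥ z) := by
  obtain ⟨v, hv⟩ := hconn
  set S := ∑ i, |Γ i i|
  have hS : 0 ≤ S := by positivity
  set h : ℝ := 1 / (1 + S)
  have hh : 0 < h := by positivity
  have hhS : h * (1 + S) = 1 := by simp only [h]; field_simp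
  set A : Matrix (Fin p) (Fin p) ℝ := 1 + h • Γ with hAdef
  have hdiag : ∀ i, 0 < A i i := fun i => by
    have h1 : |Γ i i| ≤ S :=
      Finset.single_le_sum (f := fun i => |Γ i i|) (fun j _ => abs_nonneg _) (Finset.mem_univ i)
    have h2 := neg_abs_le (Γ i i)
    simp only [hAdef, Matrix.add_apply, one_apply_eq, Matrix.smul_apply, smul_eq_mul]
    nlinarith
  have hoff : ∀ i j, i ≠ j → A i j = h * Γ i j := fun i j hij => by
    simp [hAdef, one_apply_ne hij]
  have hrow : ∀ i, ∑ j, Γ i j = 0 := fun i => by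
    rw [← Finset.add_sum_erase _ _ (Finset.mem_univ i), hΓ.2 i, Finset.filter_ne']
    ring
  have hA : A ∈ rowStochastic ℝ (Fin p) := by
    rw [mem_rowStochastic_iff_sum]
    refine ⟨fun i j => ?_, fun i => ?_⟩
    · by_cases hij : i = j
      · subst hij; exact (hdiag i).le
      · rw [hoff i j hij]; exact mul_nonneg hh.le (hΓ.1 i j hij)
    · simp [hAdef, Finset.sum_add_distrib, ← Finset.mul_sum, hrow, one_apply]
  have hreach : ∀ u, Relation.ReflTransGen (fun i j => 0 < A i j) u v := fun u => by
    refine Relation.ReflTransGen.mono ?_ _ _ (hv u)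
    intro i j hij
    by_cases h' : i = j
    · subst h'; exact hdiag i
    · rw [hoff i j h']; exact mul_pos hh hij
  have hrA : r ᵥ* A = r := by simp [hAdef, vecMul_add, vecMul_smul, hr]
  obtain ⟨N, hN, hcontr⟩ := exists_pow_mulVec_contraction hA hdiag hreach hrA hr1
  set P := ∑ k ∈ Finset.range N, (A ^ k)ᵀ * A ^ k with hP
  have hPz : ∀ z : Fin p → ℝ,
      z ⬝ᵥ P *ᵥ z = ∑ k ∈ Finset.range N, (A ^ k *ᵥ z) ⬝ᵥ (A ^ k *ᵥ z) := fun z => by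
    rw [hP, sum_mulVec, dotProduct_sum]
    simp only [mulVec_dotProduct_mulVec]
  have hPge : ∀ z : Fin p → ℝ, z ⬝ᵥ z ≤ z ⬝ᵥ P *ᵥ z := fun z => by
    rw [hPz]
    simpa using Finset.single_le_sum (f := fun k => (A ^ k *ᵥ z) ⬝ᵥ (A ^ k *ᵥ z))
      (fun k _ => dotProduct_self_nonneg _) (Finset.mem_range.2 hN)
  refine ⟨P, 1 / (2 * h), by positivity, hPge, fun z hz => ?_⟩
  have h1 : (A *ᵥ z) ⬝ᵥ P *ᵥ (A *ᵥ z) - z ⬝ᵥ P *ᵥ z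
      = (A ^ N *ᵥ z) ⬝ᵥ (A ^ N *ᵥ z) - z ⬝ᵥ z := by
    rw [hPz, hPz, ← Finset.sum_sub_distrib]
    simp only [mulVec_mulVec, ← pow_succ]
    rw [Finset.sum_range_sub (fun k => (A ^ k *ᵥ z) ⬝ᵥ (A ^ k *ᵥ z))]
    simp
  have h2 : A *ᵥ z = z + h • (Γ *ᵥ z) := by simp [hAdef, add_mulVec, smul_mulVec]
  have h3 : z ⬝ᵥ (Γᵀ * P + P * Γ) *ᵥ z = (Γ *ᵥ z) ⬝ᵥ P *ᵥ z + z ⬝ᵥ P *ᵥ (Γ *ᵥ z) := by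
    rw [add_mulVec, dotProduct_add, ← mulVec_mulVec, ← mulVec_mulVec, dotProduct_mulVec z Γᵀ,
      vecMul_transpose]
  have h4 : 0 ≤ (Γ *ᵥ z) ⬝ᵥ P *ᵥ (Γ *ᵥ z) := (dotProduct_self_nonneg _).trans (hPge _)
  have h5 := hcontr z hz
  rw [h2] at h1
  simp only [mulVec_add, mulVec_smul, add_dotProduct, dotProduct_add, smul_dotProduct,
    dotProduct_smul, smul_eq_mul] at h1
  rw [h3]
  have h6 : h * ((Γ *ᵥ z) ⬝ᵥ P *ᵥ z + z ⬝ᵥ P *ᵥ (Γ *ᵥ z)) ≤ -(1 / 2) * (z ⬝ᵥ z) := by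
    nlinarith [mul_nonneg hh.le (mul_nonneg hh.le h4)]
  rw [show -(1 / (2 * h)) * (z ⬝ᵥ z) = (-(1 / 2) * (z ⬝ᵥ z)) / h by field_simp, le_div_iff₀ hh]
  linarith

lemma eunorm_sq {ι : Type*} [Fintype ι] (v : ι → ℝ) : eunorm v ^ 2 = v ⬝ᵥ v := by
  rw [eunorm, Real.sq_sqrt (Finset.sum_nonneg fun i _ => sq_nonneg (v i))]
  simp [dotProduct, sq]

lemma eunorm_nonneg {ι : Type*} [Fintype ι] (v : ι → ℝ) : 0 ≤ eunorm v := Real.sqrt_nonneg _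

lemma exists_eq_smul_eunorm_eq_one {ι : Type*} [Fintype ι] {v : ι → ℝ} (hv : v ≠ 0) :
    ∃ w : ι → ℝ, eunorm w = 1 ∧ v = eunorm v • w := by
  have hpos : 0 < eunorm v := by
    refine (eunorm_nonneg v).lt_of_ne' fun h => hv ?_
    rw [← dotProduct_self_eq_zero, ← eunorm_sq, h]
    norm_num
  refine ⟨(eunorm v)⁻¹ • v, ?_, ?_⟩
  · rw [← sq_eq_sq₀ (eunorm_nonneg _) zero_le_one, eunorm_sq, smul_dotProduct, dotProduct_smul,
      ← eunorm_sq, smul_eq_mul, smul_eq_mul]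
    field_simp
  · rw [smul_smul, mul_inv_cancel₀ hpos.ne', one_smul]

/-- A matrix of spectral norm at most one is a contraction. -/
lemma mulVec_dotProduct_self_le_of_specNorm_le_one {m n : Type*} [Fintype m] [Fintype n]
    {M : Matrix m n ℝ} (hM : specNorm M ≤ 1) (u : n → ℝ) :
    (M *ᵥ u) ⬝ᵥ (M *ᵥ u) ≤ u ⬝ᵥ u := by
  obtain ⟨L, -, hL⟩ := exists_dotProduct_mulVec_le (Mᵀ * M)
  have hbdd : BddAbove {c : ℝ | ∃ v : n → ℝ, eunorm v ≤ 1 ∧ c = eunorm (M.mulVec v)} := by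
    refine ⟨1 + |L|, ?_⟩
    rintro _ ⟨v, hv, rfl⟩
    refine le_of_sq_le_sq ?_ (by positivity)
    have h1 := hL v
    rw [← mulVec_dotProduct_mulVec, ← eunorm_sq, ← eunorm_sq] at h1
    have h2 : eunorm v ^ 2 ≤ 1 := pow_le_one₀ (eunorm_nonneg v) hv
    nlinarith [le_abs_self L, abs_nonneg L, sq_nonneg (eunorm v)]
  by_cases hu : u = 0
  · simp [hu]
  obtain ⟨w, hw, huw⟩ := exists_eq_smul_eunorm_eq_one hu
  have h1 : eunorm (M *ᵥ w) ≤ 1 := (le_csSup hbdd ⟨w, hw.le, rfl⟩).trans hM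
  have h2 : (M *ᵥ w) ⬝ᵥ (M *ᵥ w) ≤ 1 := by
    rw [← eunorm_sq]
    exact pow_le_one₀ (eunorm_nonneg _) h1
  rw [← eunorm_sq u, huw, mulVec_smul, smul_dotProduct, dotProduct_smul, smul_eq_mul, smul_eq_mul,
    ← huw]
  nlinarith [sq_nonneg (eunorm u)]

lemma sq_mul_dotProduct_self_le_of_le_sigmaMin {m n : Type*} [Fintype m] [Fintype n]
    {M : Matrix m n ℝ} {ε : ℝ} (hε : 0 ≤ ε) (hM : ε ≤ sigmaMin M) (u : n → ℝ) :
    ε ^ 2 * (u ⬝ᵥ u) ≤ (M *ᵥ u) ⬝ᵥ (M *ᵥ u) := by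
  have hbdd : BddBelow {c : ℝ | ∃ v : n → ℝ, eunorm v = 1 ∧ c = eunorm (M.mulVec v)} := by
    refine ⟨0, ?_⟩
    rintro _ ⟨v, -, rfl⟩
    exact eunorm_nonneg _
  by_cases hu : u = 0
  · simp [hu]
  obtain ⟨w, hw, huw⟩ := exists_eq_smul_eunorm_eq_one hu
  have h1 : ε ≤ eunorm (M *ᵥ w) := hM.trans (csInf_le hbdd ⟨w, hw, rfl⟩)
  have h2 : ε ^ 2 ≤ (M *ᵥ w) ⬝ᵥ (M *ᵥ w) := by
    rw [← eunorm_sq]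
    exact pow_le_pow_left₀ hε h1 2
  rw [← eunorm_sq u, huw, mulVec_smul, smul_dotProduct, dotProduct_smul, smul_eq_mul, smul_eq_mul,
    ← huw]
  nlinarith [sq_nonneg (eunorm u)]

namespace InQbar

variable {n : ℕ} {R : Matrix (Fin n) (Fin n) ℝ}

lemma isSymm (hR : InQbar R) : R.IsSymm := by
  simpa [IsSymm, IsHermitian, conjTranspose_eq_transpose_of_trivial] using hR.1.isHermitian

lemma dotProduct_mulVec_nonneg (hR : InQbar R) (u : Fin n → ℝ) : 0 ≤ u ⬝ᵥ R *ᵥ u := by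
  simpa using hR.1.dotProduct_mulVec_nonneg u

lemma dotProduct_mulVec_le (hR : InQbar R) (u : Fin n → ℝ) : u ⬝ᵥ R *ᵥ u ≤ u ⬝ᵥ u := by
  have h1 := mulVec_dotProduct_self_le_of_specNorm_le_one hR.2 u
  have h2 := dotProduct_self_nonneg (u - R *ᵥ u)
  simp only [sub_dotProduct, dotProduct_sub, dotProduct_comm (R *ᵥ u) u] at h2
  linarith

lemma mulVec_dotProduct_mulVec_le (hR : InQbar R) (u : Fin n → ℝ) :
    (R *ᵥ u) ⬝ᵥ (R *ᵥ u) ≤ u ⬝ᵥ R *ᵥ u := by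
  simpa using mulVec_dotProduct_self_le hR.isSymm hR.dotProduct_mulVec_nonneg one_pos
    (by simpa using hR.dotProduct_mulVec_le) u

lemma dotProduct_mulVec_le_two_mul_add (hR : InQbar R) (u w : Fin n → ℝ) :
    u ⬝ᵥ R *ᵥ u ≤ 2 * (w ⬝ᵥ R *ᵥ w) + 2 * ((w - u) ⬝ᵥ (w - u)) := by
  have h1 := hR.dotProduct_mulVec_le (w - u)
  have h2 := hR.dotProduct_mulVec_nonneg (w + (w - u))
  simp only [mulVec_sub, mulVec_add, add_dotProduct, dotProduct_add, sub_dotProduct,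
    dotProduct_sub] at h1 h2 ⊢
  linarith

lemma exists_eq_transpose_mul_self (hR : InQbar R) :
    ∃ B : Matrix (Fin n) (Fin n) ℝ, R = Bᵀ * B := by
  open scoped MatrixOrder in
  obtain ⟨B, hB⟩ := CStarAlgebra.nonneg_iff_eq_star_mul_self.1 hR.1.nonneg
  exact ⟨B, by simpa [star_eq_conjTranspose, conjTranspose_eq_transpose_of_trivial] using hB⟩

end InQbar

lemma intervalIntegrable_fun_sum {ι : Type*} (S : Finset ι) {f : ι → ℝ → ℝ} {a b : ℝ}
    (h : ∀ i ∈ S, IntervalIntegrable (f i) volume a b) :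
    IntervalIntegrable (fun t => ∑ i ∈ S, f i t) volume a b := by
  simpa only [Finset.sum_fn] using IntervalIntegrable.sum S h

lemma intervalIntegrable_dotProduct_mulVec {n : ℕ} {Q : ℝ → Matrix (Fin n) (Fin n) ℝ}
    (hQint : ∀ a b : Fin n, ∀ s u : ℝ, IntervalIntegrable (fun t => Q t a b) volume s u)
    (v : Fin n → ℝ) (s u : ℝ) : IntervalIntegrable (fun t => v ⬝ᵥ Q t *ᵥ v) volume s u := by
  simp only [dotProduct, mulVec, Finset.mul_sum]
  exact intervalIntegrable_fun_sum _ fun i _ => intervalIntegrable_fun_sum _ fun j _ =>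
    ((hQint i j s u).mul_const _).const_mul _

/-- Persistence of excitation, expressed through the averaged quadratic form. -/
lemma PersExcitingCT.exists_le_integral {n : ℕ} {Q : ℝ → Matrix (Fin n) (Fin n) ℝ}
    (hQpe : PersExcitingCT Q) (hQ : ∀ t : ℝ, 0 ≤ t → InQbar (Q t))
    (hQint : ∀ a b : Fin n, ∀ s u : ℝ, IntervalIntegrable (fun t => Q t a b) volume s u) :
    ∃ μ T : ℝ, 0 < μ ∧ 0 < T ∧ ∀ t : ℝ, 0 ≤ t → ∀ v : Fin n → ℝ,
      μ * (v ⬝ᵥ v) ≤ ∫ s in t..(t + T), v ⬝ᵥ Q s *ᵥ v := by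
  obtain ⟨ε, T, hε, hT, h⟩ := hQpe
  refine ⟨ε ^ 2 / T, T, by positivity, hT, fun t ht v => ?_⟩
  set M : Matrix (Fin n) (Fin n) ℝ := Matrix.of fun a b => ∫ s in t..(t + T), Q s a b with hM
  have hform : ∀ u : Fin n → ℝ, u ⬝ᵥ M *ᵥ u = ∫ s in t..(t + T), u ⬝ᵥ Q s *ᵥ u := fun u => by
    have hexp : ∀ N : Matrix (Fin n) (Fin n) ℝ,
        u ⬝ᵥ N *ᵥ u = ∑ i, ∑ j, u i * (N i j * u j) := fun N => by
      simp [dotProduct, mulVec, Finset.mul_sum]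
    simp only [hexp]
    rw [intervalIntegral.integral_finsetSum fun i _ =>
      intervalIntegrable_fun_sum _ fun j _ => ((hQint i j _ _).mul_const _).const_mul _]
    refine Finset.sum_congr rfl fun i _ => ?_
    rw [intervalIntegral.integral_finsetSum fun j _ => ((hQint i j _ _).mul_const _).const_mul _]
    refine Finset.sum_congr rfl fun j _ => ?_
    rw [intervalIntegral.integral_const_mul, intervalIntegral.integral_mul_const, hM, of_apply]
  have htT : t ≤ t + T := by linarith
  have hsymm : M.IsSymm := by
    ext a b
    simp only [hM, transpose_apply, of_apply]
    refine intervalIntegral.integral_congr fun s hs => ?_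
    rw [Set.uIcc_of_le htT] at hs
    exact (hQ s (ht.trans hs.1)).isSymm.apply a b
  have h0 : ∀ u : Fin n → ℝ, 0 ≤ u ⬝ᵥ M *ᵥ u := fun u => by
    rw [hform]
    exact intervalIntegral.integral_nonneg htT fun s hs =>
      (hQ s (ht.trans hs.1)).dotProduct_mulVec_nonneg u
  have h1 : ∀ u : Fin n → ℝ, u ⬝ᵥ M *ᵥ u ≤ T * (u ⬝ᵥ u) := fun u => by
    rw [hform]
    refine (intervalIntegral.integral_mono_on htT (intervalIntegrable_dotProduct_mulVec hQint u _ _)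
      (intervalIntegrable_const (c := u ⬝ᵥ u)) fun s hs =>
      (hQ s (ht.trans hs.1)).dotProduct_mulVec_le u).trans ?_
    simp
  have h2 := sq_mul_dotProduct_self_le_of_le_sigmaMin hε.le (h t ht) v
  have h3 := mulVec_dotProduct_self_le hsymm h0 hT h1 v
  rw [← hform, div_mul_eq_mul_div, div_le_iff₀ hT]
  linarith

/-- If `f'² ≤ -K V'`, the displacement of `f` is controlled by the decrease of `V`. -/
lemma sq_sub_le_of_sq_deriv_le {f f' V V' : ℝ → ℝ} {K a b : ℝ} (hab : a ≤ b)
    (hf : ∀ s ∈ Set.Icc a b, HasDerivAt f (f' s) s)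
    (hV : ∀ s ∈ Set.Icc a b, HasDerivAt V (V' s) s)
    (h : ∀ s ∈ Set.Icc a b, f' s ^ 2 ≤ -(K * V' s)) :
    (f b - f a) ^ 2 ≤ K * (b - a) * (V a - V b) := by
  have hanti : ∀ g g' : ℝ → ℝ, (∀ s ∈ Set.Icc a b, HasDerivAt g (g' s) s) →
      (∀ s ∈ Set.Icc a b, g' s ≤ 0) → g b ≤ g a := fun g g' hg hg' =>
    antitoneOn_of_hasDerivWithinAt_nonpos (convex_Icc a b)
      (fun s hs => (hg s hs).continuousAt.continuousWithinAt)
      (fun s hs => (hg s (interior_subset hs)).hasDerivWithinAt)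
      (fun s hs => hg' s (interior_subset hs)) (Set.left_mem_Icc.2 hab) (Set.right_mem_Icc.2 hab) hab
  have hbound : ∀ g g' : ℝ → ℝ, (∀ s ∈ Set.Icc a b, HasDerivAt g (g' s) s) →
      (∀ s ∈ Set.Icc a b, g' s ^ 2 ≤ -(K * V' s)) → 0 < g b - g a →
      (g b - g a) ^ 2 ≤ K * (b - a) * (V a - V b) := by
    intro g g' hg hg' hpos
    have hlt : 0 < b - a := by
      rcases hab.eq_or_lt with rfl | h
      · simp at hpos
      · linarith
    obtain ⟨θ, hθ, hθeq⟩ : ∃ θ : ℝ, 0 < θ ∧ θ * (b - a) = g b - g a :=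
      ⟨(g b - g a) / (b - a), by positivity, by field_simp⟩
    have key := hanti (fun s => 2 * θ * g s - θ ^ 2 * s + K * V s)
      (fun s => 2 * θ * g' s - θ ^ 2 * 1 + K * V' s)
      (fun s hs => (((hg s hs).const_mul _).sub ((hasDerivAt_id s).const_mul _)).add
        ((hV s hs).const_mul _))
      (fun s hs => by nlinarith [hg' s hs, sq_nonneg (g' s - θ)])
    have h2 : θ * (g b - g a) ≤ K * (V a - V b) := by
      have : θ ^ 2 * (b - a) = θ * (g b - g a) := by rw [← hθeq]; ring
      nlinarith
    calc (g b - g a) ^ 2 = (θ * (g b - g a)) * (b - a) := by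
          rw [sq]; nth_rewrite 1 [← hθeq]; ring
      _ ≤ (K * (V a - V b)) * (b - a) := by gcongr
      _ = _ := by ring
  rcases lt_trichotomy (f b - f a) 0 with hneg | hzero | hpos
  · have := hbound (fun s => -f s) (fun s => -f' s) (fun s hs => (hf s hs).fun_neg)
      (fun s hs => by simpa using h s hs) (by linarith)
    linarith
  · have := hanti (fun s => K * V s) (fun s => K * V' s) (fun s hs => (hV s hs).const_mul _)
      (fun s hs => by nlinarith [h s hs, sq_nonneg (f' s)])
    rw [hzero]
    nlinarith
  · exact hbound f f' hf h hpos

/-- A nonincreasing nonnegative function that loses a fixed fraction over every window of length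
`T` decays exponentially. -/
lemma exists_exp_decay {V : ℝ → ℝ} {T ρ : ℝ} (hT : 0 < T) (hρ : 0 < ρ) (hρ1 : ρ < 1)
    (h0 : ∀ t, 0 ≤ t → 0 ≤ V t) (hV : AntitoneOn V (Set.Ici 0))
    (hstep : ∀ t, 0 ≤ t → V (t + T) ≤ ρ * V t) :
    ∃ c α : ℝ, 0 < c ∧ 0 < α ∧ ∀ t, 0 ≤ t → V t ≤ c * Real.exp (-α * t) := by
  have hlog : Real.log ρ < 0 := Real.log_neg hρ hρ1
  have hpow : ∀ k : ℕ, V (k * T) ≤ ρ ^ k * V 0 := fun k => by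
    induction k with
    | zero => simp
    | succ k ih =>
      have := hstep (k * T) (by positivity)
      calc V ((k + 1 : ℕ) * T) = V (k * T + T) := by push_cast; ring_nf
        _ ≤ ρ * V (k * T) := this
        _ ≤ ρ * (ρ ^ k * V 0) := by gcongr
        _ = _ := by ring
  refine ⟨(V 0 + 1) / ρ, -Real.log ρ / T, by have := h0 0 le_rfl; positivity,
    div_pos (neg_pos.2 hlog) hT, fun t ht => ?_⟩
  have hfl : (⌊t / T⌋₊ : ℝ) * T ≤ t := by
    rw [← le_div_iff₀ hT]; exact Nat.floor_le (by positivity)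
  have hlt : t / T - 1 ≤ ⌊t / T⌋₊ := by linarith [Nat.lt_floor_add_one (t / T)]
  have hV0 := h0 0 le_rfl
  calc V t ≤ V (⌊t / T⌋₊ * T) := hV (Set.mem_Ici.2 (by positivity)) (Set.mem_Ici.2 ht) hfl
    _ ≤ ρ ^ ⌊t / T⌋₊ * V 0 := hpow _
    _ = Real.exp (Real.log ρ * ⌊t / T⌋₊) * V 0 := by
      rw [← Real.rpow_natCast, Real.rpow_def_of_pos hρ]
    _ ≤ Real.exp (Real.log ρ * (t / T - 1)) * (V 0 + 1) := by
      gcongr ?_ * ?_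
      · exact Real.exp_le_exp.2 (mul_le_mul_of_nonpos_left hlt hlog.le)
      · linarith
    _ = (V 0 + 1) / ρ * Real.exp (-(-Real.log ρ / T) * t) := by
      rw [mul_sub, mul_one, Real.exp_sub, Real.exp_log hρ]
      rw [show -(-Real.log ρ / T) * t = Real.log ρ * (t / T) by ring]
      ring

lemma trace_transpose_mul_mul {ι κ : Type*} [Fintype ι] [Fintype κ] (Z : Matrix ι κ ℝ)
    (M : Matrix ι ι ℝ) : trace (Zᵀ * M * Z) = ∑ a, Zᵀ a ⬝ᵥ M *ᵥ Zᵀ a := by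
  refine Finset.sum_congr rfl fun a _ => ?_
  rw [dotProduct_mulVec]
  rfl

lemma trace_mul_mul_transpose {ι κ : Type*} [Fintype ι] [Fintype κ] (Z : Matrix ι κ ℝ)
    (M : Matrix κ κ ℝ) : trace (Z * M * Zᵀ) = ∑ i, Z i ⬝ᵥ M *ᵥ Z i := by
  simpa using trace_transpose_mul_mul Zᵀ M

lemma hasDerivAt_matrix_mul_apply {ι κ l : Type*} [Fintype κ] {A : ℝ → Matrix ι κ ℝ}
    {B : ℝ → Matrix κ l ℝ} {A' : Matrix ι κ ℝ} {B' : Matrix κ l ℝ} {t : ℝ}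
    (hA : ∀ i k, HasDerivAt (fun s => A s i k) (A' i k) t)
    (hB : ∀ k j, HasDerivAt (fun s => B s k j) (B' k j) t) (i : ι) (j : l) :
    HasDerivAt (fun s => (A s * B s) i j) ((A' * B t + A t * B') i j) t := by
  simp only [Matrix.add_apply, mul_apply, ← Finset.sum_add_distrib]
  exact HasDerivAt.fun_sum fun k _ => (hA i k).mul (hB k j)

lemma hasDerivAt_trace_quadratic {ι κ : Type*} [Fintype ι] [Fintype κ] (P : Matrix ι ι ℝ)
    {Y : ℝ → Matrix ι κ ℝ} {Y' : Matrix ι κ ℝ} {t : ℝ}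
    (hY : ∀ i a, HasDerivAt (fun s => Y s i a) (Y' i a) t) :
    HasDerivAt (fun s => trace ((Y s)ᵀ * P * Y s))
      (trace (Y'ᵀ * P * Y t + (Y t)ᵀ * P * Y')) t := by
  have hYP : ∀ a j, HasDerivAt (fun s => ((Y s)ᵀ * P) a j) ((Y'ᵀ * P) a j) t := fun a j => by
    simpa using hasDerivAt_matrix_mul_apply (A := fun s => (Y s)ᵀ) (A' := Y'ᵀ) (B := fun _ => P)
      (B' := 0) (fun a i => hY i a) (fun k j => by simpa using hasDerivAt_const t (P k j)) a j
  exact HasDerivAt.fun_sum fun a _ => hasDerivAt_matrix_mul_apply hYP hY a a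

section Dissipation

variable {p n : ℕ} {R : Matrix (Fin n) (Fin n) ℝ} {r : Fin p → ℝ} {Y : Matrix (Fin p) (Fin n) ℝ}

/-- A linear matrix inequality on the annihilator of `r` tensors with a positive semidefinite
matrix. -/
lemma trace_mul_le_of_annihilator (hR : InQbar R) (hY : r ᵥ* Y = 0)
    {M : Matrix (Fin p) (Fin p) ℝ} {c : ℝ}
    (hM : ∀ z : Fin p → ℝ, r ⬝ᵥ z = 0 → z ⬝ᵥ M *ᵥ z ≤ c * (z ⬝ᵥ z)) :
    trace (Yᵀ * M * Y * R) ≤ c * ∑ i, Y i ⬝ᵥ R *ᵥ Y i := by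
  obtain ⟨B, rfl⟩ := hR.exists_eq_transpose_mul_self
  have h1 : trace (Yᵀ * M * Y * (Bᵀ * B)) = trace ((Y * Bᵀ)ᵀ * M * (Y * Bᵀ)) := by
    rw [← Matrix.mul_assoc, trace_mul_comm, transpose_mul, transpose_transpose]
    simp only [Matrix.mul_assoc]
  have h2 : ∑ i, Y i ⬝ᵥ (Bᵀ * B) *ᵥ Y i =
      trace ((Y * Bᵀ)ᵀ * (1 : Matrix (Fin p) (Fin p) ℝ) * (Y * Bᵀ)) := by
    rw [← trace_mul_mul_transpose, Matrix.mul_one, trace_mul_comm (Y * Bᵀ)ᵀ, transpose_mul,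
      transpose_transpose]
    simp only [Matrix.mul_assoc]
  rw [h1, h2, trace_transpose_mul_mul, trace_transpose_mul_mul, Finset.mul_sum]
  refine Finset.sum_le_sum fun a _ => ?_
  rw [one_mulVec]
  refine hM _ ?_
  have h3 : r ᵥ* (Y * Bᵀ) = 0 := by rw [← vecMul_vecMul, hY, zero_vecMul]
  exact congrFun h3 a

lemma trace_lyapunov_deriv_le (hR : InQbar R) (hY : r ᵥ* Y = 0)
    {Γ P : Matrix (Fin p) (Fin p) ℝ} {c : ℝ}
    (hP : ∀ z : Fin p → ℝ, r ⬝ᵥ z = 0 → z ⬝ᵥ (Γᵀ * P + P * Γ) *ᵥ z ≤ c * (z ⬝ᵥ z)) :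
    trace ((Γ * Y * R)ᵀ * P * Y + Yᵀ * P * (Γ * Y * R)) ≤ c * ∑ i, Y i ⬝ᵥ R *ᵥ Y i := by
  refine le_trans (le_of_eq ?_) (trace_mul_le_of_annihilator hR hY hP)
  have h1 : trace ((Γ * Y * R)ᵀ * P * Y) = trace (Yᵀ * (Γᵀ * P) * Y * R) := by
    rw [trace_mul_comm _ R]
    simp only [transpose_mul, hR.isSymm.eq, Matrix.mul_assoc]
  rw [trace_add, h1, ← trace_add]
  simp only [Matrix.mul_add, Matrix.add_mul, Matrix.mul_assoc]

lemma sq_velocity_le (hR : InQbar R) (hY : r ᵥ* Y = 0) {Γ : Matrix (Fin p) (Fin p) ℝ} {C : ℝ}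
    (hC : ∀ z : Fin p → ℝ, z ⬝ᵥ (Γᵀ * Γ) *ᵥ z ≤ C * (z ⬝ᵥ z)) (i : Fin p) (a : Fin n) :
    (Γ * Y * R) i a ^ 2 ≤ C * ∑ i, Y i ⬝ᵥ R *ᵥ Y i := by
  have h1 : (Γ * Y * R) i = R *ᵥ (Γ * Y) i := by
    rw [← vecMul_transpose, hR.isSymm.eq]
    rfl
  calc (Γ * Y * R) i a ^ 2 ≤ (R *ᵥ (Γ * Y) i) ⬝ᵥ (R *ᵥ (Γ * Y) i) := by
        rw [h1]; exact sq_le_dotProduct_self _ a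
    _ ≤ (Γ * Y) i ⬝ᵥ R *ᵥ (Γ * Y) i := hR.mulVec_dotProduct_mulVec_le _
    _ ≤ ∑ i, (Γ * Y) i ⬝ᵥ R *ᵥ (Γ * Y) i :=
      Finset.single_le_sum (f := fun i => (Γ * Y) i ⬝ᵥ R *ᵥ (Γ * Y) i)
        (fun i _ => hR.dotProduct_mulVec_nonneg _) (Finset.mem_univ i)
    _ = trace (Yᵀ * (Γᵀ * Γ) * Y * R) := by
      rw [← trace_mul_mul_transpose, trace_mul_comm, transpose_mul]
      simp only [Matrix.mul_assoc]
    _ ≤ _ := trace_mul_le_of_annihilator hR hY fun z _ => hC z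

end Dissipation

section Flow

variable {p n : ℕ} {Γ P : Matrix (Fin p) (Fin p) ℝ} {r : Fin p → ℝ}
  {Q : ℝ → Matrix (Fin n) (Fin n) ℝ} {Y : ℝ → Matrix (Fin p) (Fin n) ℝ} {c : ℝ}

/-- Along the flow, the Lyapunov function is nonincreasing. -/
lemma antitoneOn_lyapunov (hQ : ∀ t : ℝ, 0 ≤ t → InQbar (Q t))
    (hY : ∀ t, 0 ≤ t → ∀ i a, HasDerivAt (fun s => Y s i a) ((Γ * Y t * Q t) i a) t)
    (hrY : ∀ t, 0 ≤ t → r ᵥ* Y t = 0) (hc : 0 < c)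
    (hP : ∀ z : Fin p → ℝ, r ⬝ᵥ z = 0 → z ⬝ᵥ (Γᵀ * P + P * Γ) *ᵥ z ≤ -c * (z ⬝ᵥ z)) :
    AntitoneOn (fun t => trace ((Y t)ᵀ * P * Y t)) (Set.Ici 0) := by
  have hV := fun t (ht : 0 ≤ t) => hasDerivAt_trace_quadratic P (hY t ht)
  refine antitoneOn_of_hasDerivWithinAt_nonpos (convex_Ici 0)
    (fun s hs => (hV s hs).continuousAt.continuousWithinAt)
    (fun s hs => (hV s (interior_subset hs)).hasDerivWithinAt) fun s hs => ?_
  have hs0 : 0 ≤ s := interior_subset hs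
  refine (trace_lyapunov_deriv_le (hQ s hs0) (hrY s hs0) hP).trans ?_
  have : 0 ≤ ∑ i, Y s i ⬝ᵥ Q s *ᵥ Y s i :=
    Finset.sum_nonneg fun i _ => (hQ s hs0).dotProduct_mulVec_nonneg _
  nlinarith

/-- Under persistent excitation, the Lyapunov function loses a fixed fraction over every window. -/
lemma exists_lyapunov_decrease (hQ : ∀ t : ℝ, 0 ≤ t → InQbar (Q t))
    (hQint : ∀ a b : Fin n, ∀ s u : ℝ, IntervalIntegrable (fun t => Q t a b) volume s u)
    {μ T : ℝ} (hμ : 0 < μ) (hT : 0 < T)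
    (hpe : ∀ t : ℝ, 0 ≤ t → ∀ v : Fin n → ℝ,
      μ * (v ⬝ᵥ v) ≤ ∫ s in t..(t + T), v ⬝ᵥ Q s *ᵥ v)
    (hY : ∀ t, 0 ≤ t → ∀ i a, HasDerivAt (fun s => Y s i a) ((Γ * Y t * Q t) i a) t)
    (hrY : ∀ t, 0 ≤ t → r ᵥ* Y t = 0) (hc : 0 < c)
    (hP : ∀ z : Fin p → ℝ, r ⬝ᵥ z = 0 → z ⬝ᵥ (Γᵀ * P + P * Γ) *ᵥ z ≤ -c * (z ⬝ᵥ z)) :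
    ∃ κ : ℝ, 0 < κ ∧ ∀ t, 0 ≤ t → κ * trace ((Y t)ᵀ * P * Y t) ≤
      trace ((Y t)ᵀ * P * Y t) - trace ((Y (t + T))ᵀ * P * Y (t + T)) := by
  obtain ⟨L, hL0, hL⟩ := exists_dotProduct_mulVec_le P
  obtain ⟨C, hC0, hC⟩ := exists_dotProduct_mulVec_le (Γᵀ * Γ)
  have hanti := antitoneOn_lyapunov hQ hY hrY hc hP
  have hV := fun t (ht : 0 ≤ t) => hasDerivAt_trace_quadratic P (hY t ht)
  have hV' := fun t (ht : 0 ≤ t) => trace_lyapunov_deriv_le (hQ t ht) (hrY t ht) hP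
  set V : ℝ → ℝ := fun t => trace ((Y t)ᵀ * P * Y t) with hVdef
  set V' : ℝ → ℝ := fun t =>
    trace ((Γ * Y t * Q t)ᵀ * P * Y t + (Y t)ᵀ * P * (Γ * Y t * Q t)) with hV'def
  set G : ℝ := 2 / c + 2 * (p * n * (C / c * T)) * T with hG
  have hG0 : 0 < G := by positivity
  refine ⟨μ / (L * G), by positivity, fun t ht => ?_⟩
  have htT : t ≤ t + T := by linarith
  set E := V t - V (t + T) with hE
  have hdisp : ∀ s ∈ Set.Icc t (t + T), ∀ i a, (Y s i a - Y t i a) ^ 2 ≤ C / c * T * E := by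
    intro s hs i a
    have hmem : ∀ u ∈ Set.Icc t s, 0 ≤ u := fun u hu => ht.trans hu.1
    refine (sq_sub_le_of_sq_deriv_le (K := C / c) hs.1 (fun u hu => hY u (hmem u hu) i a)
      (fun u hu => hV u (hmem u hu)) fun u hu => ?_).trans ?_
    · refine (sq_velocity_le (hQ u (hmem u hu)) (hrY u (hmem u hu)) hC i a).trans ?_
      have := hV' u (hmem u hu)
      rw [show -(C / c * V' u) = C * (-V' u / c) by ring]
      refine mul_le_mul_of_nonneg_left ?_ hC0.le
      rw [le_div_iff₀ hc]
      linarith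
    · have h1 : V (t + T) ≤ V s := hanti (Set.mem_Ici.2 (ht.trans hs.1))
        (Set.mem_Ici.2 (ht.trans htT)) hs.2
      have h2 : V s ≤ V t := hanti (Set.mem_Ici.2 ht) (Set.mem_Ici.2 (ht.trans hs.1)) hs.1
      have h3 : s - t ≤ T := by linarith [hs.2]
      have h4 : V t - V s ≤ E := by linarith
      exact mul_le_mul (by gcongr) h4 (by linarith) (by positivity)
  have hdispsum : ∀ s ∈ Set.Icc t (t + T),
      ∑ i, (Y s i - Y t i) ⬝ᵥ (Y s i - Y t i) ≤ p * n * (C / c * T) * E := by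
    intro s hs
    calc ∑ i, (Y s i - Y t i) ⬝ᵥ (Y s i - Y t i) = ∑ i, ∑ a, (Y s i a - Y t i a) ^ 2 := by
          simp [dotProduct, sq]
      _ ≤ ∑ _i : Fin p, ∑ _a : Fin n, C / c * T * E :=
        Finset.sum_le_sum fun i _ => Finset.sum_le_sum fun a _ => hdisp s hs i a
      _ = _ := by simp; ring
  have hinterval : ∫ s in t..(t + T), ∑ i, Y t i ⬝ᵥ Q s *ᵥ Y t i ≤ G * E := by
    have hcont : ∀ s ∈ Set.Icc t (t + T), HasDerivAt
        (fun s => -(2 / c) * V s + 2 * (p * n * (C / c * T) * E) * s)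
        (-(2 / c) * V' s + 2 * (p * n * (C / c * T) * E) * 1) s := fun s hs =>
      ((hV s (ht.trans hs.1)).const_mul _).add ((hasDerivAt_id s).const_mul _)
    refine (intervalIntegral.integral_le_sub_of_hasDeriv_right_of_le htT
      (fun s hs => (hcont s hs).continuousAt.continuousWithinAt)
      (fun s hs => (hcont s (Set.Ioo_subset_Icc_self hs)).hasDerivWithinAt) ?_ ?_).trans
      (le_of_eq ?_)
    · rw [← intervalIntegrable_iff_integrableOn_Icc_of_le htT]
      exact intervalIntegrable_fun_sum _ fun i _ =>
        intervalIntegrable_dotProduct_mulVec hQint _ _ _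
    · intro s hs
      have hs' := Set.Ioo_subset_Icc_self hs
      have hs0 : 0 ≤ s := ht.trans hs'.1
      have h1 : ∑ i, Y t i ⬝ᵥ Q s *ᵥ Y t i ≤ 2 * ∑ i, Y s i ⬝ᵥ Q s *ᵥ Y s i
          + 2 * ∑ i, (Y s i - Y t i) ⬝ᵥ (Y s i - Y t i) := by
        rw [Finset.mul_sum, Finset.mul_sum, ← Finset.sum_add_distrib]
        exact Finset.sum_le_sum fun i _ => (hQ s hs0).dotProduct_mulVec_le_two_mul_add _ _
      have h2 := hdispsum s hs'
      have h3 : ∑ i, Y s i ⬝ᵥ Q s *ᵥ Y s i ≤ -V' s / c := by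
        rw [le_div_iff₀ hc]
        linarith [hV' s hs0]
      have h4 : -(2 / c) * V' s = 2 * (-V' s / c) := by ring
      rw [h4]
      linarith
    · simp only [hE, hG]
      ring
  have hlow : μ * ∑ i, Y t i ⬝ᵥ Y t i ≤ ∫ s in t..(t + T), ∑ i, Y t i ⬝ᵥ Q s *ᵥ Y t i := by
    rw [intervalIntegral.integral_finsetSum fun i _ =>
      intervalIntegrable_dotProduct_mulVec hQint (Y t i) _ _, Finset.mul_sum]
    exact Finset.sum_le_sum fun i _ => hpe t ht _
  have hup : V t ≤ L * ∑ i, Y t i ⬝ᵥ Y t i := by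
    have h1 : ∑ i, Y t i ⬝ᵥ Y t i = ∑ a, (Y t)ᵀ a ⬝ᵥ (Y t)ᵀ a := by
      simp only [dotProduct, transpose_apply]
      exact Finset.sum_comm
    rw [h1, hVdef, Finset.mul_sum]
    simp only [trace_transpose_mul_mul]
    exact Finset.sum_le_sum fun a _ => hL _
  rw [div_mul_eq_mul_div, div_le_iff₀ (by positivity)]
  calc μ * V t ≤ μ * (L * ∑ i, Y t i ⬝ᵥ Y t i) := by gcongr
    _ = L * (μ * ∑ i, Y t i ⬝ᵥ Y t i) := by ring
    _ ≤ L * (G * E) := mul_le_mul_of_nonneg_left (hlow.trans hinterval) hL0.le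
    _ = _ := by ring

/-- A left null vector of `Γ` yields a conserved quantity of the flow. -/
lemma vecMul_eq_zero_of_flow (hr : r ᵥ* Γ = 0)
    (hY : ∀ t, 0 ≤ t → ∀ i a, HasDerivAt (fun s => Y s i a) ((Γ * Y t * Q t) i a) t)
    (h0 : r ᵥ* Y 0 = 0) (t : ℝ) (ht : 0 ≤ t) : r ᵥ* Y t = 0 := by
  ext a
  have hd : ∀ s, 0 ≤ s → HasDerivAt (fun s => (r ᵥ* Y s) a) 0 s := fun s hs => by
    have h1 : HasDerivAt (fun s => (r ᵥ* Y s) a) ((r ᵥ* (Γ * Y s * Q s)) a) s := by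
      simp only [vecMul, dotProduct]
      exact HasDerivAt.fun_sum fun i _ => (hY s hs i a).const_mul (r i)
    rwa [Matrix.mul_assoc, ← vecMul_vecMul, hr, zero_vecMul] at h1
  rw [← h0]
  exact constant_of_has_deriv_right_zero (b := t)
    (fun s hs => (hd s hs.1).continuousAt.continuousWithinAt)
    (fun s hs => (hd s hs.1).hasDerivWithinAt) t (Set.right_mem_Icc.2 ht)

end Flow

lemma IsInterconnection.sum_smul_sub {p n : ℕ} {Γ : Matrix (Fin p) (Fin p) ℝ}
    (hΓ : IsInterconnection Γ) (x : Fin p → Fin n → ℝ) (w : Fin n → ℝ) (i : Fin p) :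
    ∑ j ∈ Finset.univ.filter (fun j => j ≠ i), Γ i j • (x j - x i) =
      (Γ * Matrix.of fun j a => x j a - w a) i := by
  ext b
  rw [mul_apply, ← Finset.add_sum_erase _ _ (Finset.mem_univ i), hΓ.2 i, Finset.filter_ne',
    Finset.sum_apply, of_apply, neg_mul, Finset.sum_mul, neg_add_eq_sub,
    ← Finset.sum_sub_distrib]
  refine Finset.sum_congr rfl fun j _ => ?_
  simp only [Pi.smul_apply, Pi.sub_apply, smul_eq_mul, of_apply]
  ring

theorem stmt7 {p n : ℕ}
    (Γ : Matrix (Fin p) (Fin p) ℝ)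
    (hΓ : IsInterconnection Γ) (hconn : ConnectedMat Γ)
    (Q : ℝ → Matrix (Fin n) (Fin n) ℝ)
    (hQ : ∀ t : ℝ, 0 ≤ t → InQbar (Q t))
    (hQint : ∀ a b : Fin n, ∀ s u : ℝ, IntervalIntegrable (fun t => Q t a b) volume s u)
    (hQpe : PersExcitingCT Q)
    (r : Fin p → ℝ) (hr1 : Matrix.vecMul r Γ = 0) (hr2 : ∑ i, r i = 1)
    (x : Fin p → ℝ → Fin n → ℝ)
    (hx : ∀ i, ∀ t : ℝ, 0 ≤ t → ∀ a : Fin n,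
      HasDerivAt (fun s => x i s a)
        (((Q t).mulVec (∑ j ∈ Finset.univ.filter (fun j => j ≠ i), Γ i j • (x j t - x i t))) a) t)
    (xbar : Fin n → ℝ) (hxbar : xbar = ∑ j, r j • x j 0) :
    ∃ c α : ℝ, 0 < c ∧ 0 < α ∧
      ∀ t : ℝ, 0 ≤ t → ∀ i, eunorm (x i t - xbar) ≤ c * Real.exp (-α * t) := by
  obtain ⟨P, c, hc, hPge, hP⟩ := exists_lyapunov hΓ hconn hr1 hr2
  obtain ⟨μ, T, hμ, hT, hpe⟩ := hQpe.exists_le_integral hQ hQint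
  set Y : ℝ → Matrix (Fin p) (Fin n) ℝ := fun t => Matrix.of fun i a => x i t a - xbar a with hYdef
  have hY : ∀ t, 0 ≤ t → ∀ i a, HasDerivAt (fun s => Y s i a) ((Γ * Y t * Q t) i a) t := by
    intro t ht i a
    have h1 : (Γ * Y t * Q t) i = Q t *ᵥ (Γ * Y t) i := by
      rw [← vecMul_transpose, (hQ t ht).isSymm.eq]
      rfl
    rw [h1, ← hΓ.sum_smul_sub (fun i => x i t) xbar i]
    exact (hx i t ht a).sub_const (xbar a)
  have hrY : ∀ t, 0 ≤ t → r ᵥ* Y t = 0 := by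
    refine vecMul_eq_zero_of_flow hr1 hY ?_
    ext a
    simp [vecMul, dotProduct, hYdef, mul_sub, Finset.sum_sub_distrib, ← Finset.sum_mul, hr2, hxbar]
  obtain ⟨κ, hκ, hdec⟩ := exists_lyapunov_decrease hQ hQint hμ hT hpe hY hrY hc hP
  have hle : ∀ t i, (x i t - xbar) ⬝ᵥ (x i t - xbar) ≤ trace ((Y t)ᵀ * P * Y t) := fun t i => by
    rw [trace_transpose_mul_mul]
    refine Finset.sum_le_sum fun a _ => ?_
    refine le_trans ?_ (hPge _)
    simpa [hYdef, sq] using sq_le_dotProduct_self ((Y t)ᵀ a) i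
  have hnonneg : ∀ t, 0 ≤ trace ((Y t)ᵀ * P * Y t) := fun t => by
    rw [trace_transpose_mul_mul]
    exact Finset.sum_nonneg fun a _ => (dotProduct_self_nonneg _).trans (hPge _)
  obtain ⟨C, α, hC, hα, hdecay⟩ := exists_exp_decay (ρ := max (1 - κ) (1 / 2)) hT (by positivity)
    (max_lt (by linarith) (by norm_num)) (fun t _ => hnonneg t)
    (antitoneOn_lyapunov hQ hY hrY hc hP) fun t ht => by
      have h1 := mul_le_mul_of_nonneg_right (le_max_left (1 - κ) (1 / 2)) (hnonneg t)
      linarith [hdec t ht]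
  refine ⟨Real.sqrt C, α / 2, by positivity, by positivity, fun t ht i => ?_⟩
  refine le_of_sq_le_sq ?_ (by positivity)
  rw [eunorm_sq, mul_pow, Real.sq_sqrt hC.le, ← Real.exp_nat_mul]
  refine (hle t i).trans ((hdecay t ht).trans (le_of_eq ?_))
  congr 2
  push_cast
  ring
end
end

section
/- There exist an integer p ≥ 2, an integer n ≥ 1, a map Γ : ℝ≥0 → ℝ^{p×p} such that Γ_t is an interconnection for every t, and a map Q : ℝ≥0 → Q̄_n, such that the time-varying linear system ẋ(t) = (Γ_t ⊗ Q_t) x(t) has an unbounded solution. -/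
open Matrix MeasureTheory Filter
open scoped Kronecker

noncomputable section

/-- The interconnection on two nodes with rates `a` and `b`. -/
def twoNode (a b : ℝ) : Matrix (Fin 2) (Fin 2) ℝ := !![-a, a; b, -b]

/-- The orthogonal projection onto the line of angle `t`. -/
def lineProj (t : ℝ) : Matrix (Fin 2) (Fin 2) ℝ :=
  !![Real.cos t * Real.cos t, Real.cos t * Real.sin t;
     Real.sin t * Real.cos t, Real.sin t * Real.sin t]

/-- The drifting trajectory of the first node. -/
def drift (t : ℝ) : Fin 2 → ℝ :=
  ![2 * Real.sin t + t + Real.sin t * Real.cos t, -2 * Real.cos t + Real.sin t * Real.sin t]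

/-- The difference of the two nodes: it turns forever, and its norm decreases to a positive
limit. -/
def gap (t : ℝ) : Fin 2 → ℝ :=
  ![4 * (-(Real.exp (-t) * Real.cos t) + (1 + Real.exp (-t)) * Real.sin t),
    4 * (-(Real.exp (-t) * Real.sin t) - (1 + Real.exp (-t)) * Real.cos t)]

theorem isInterconnection_twoNode {a b : ℝ} (ha : 0 ≤ a) (hb : 0 ≤ b) :
    IsInterconnection (twoNode a b) := by
  constructor
  · intro i j hij
    fin_cases i <;> fin_cases j <;> simp_all [twoNode]
  · intro i
    fin_cases i <;> simp [twoNode, Finset.sum_filter, Fin.sum_univ_two]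

theorem eunorm_lineProj_mulVec_le (t : ℝ) (v : Fin 2 → ℝ) :
    eunorm ((lineProj t).mulVec v) ≤ eunorm v := by
  apply Real.sqrt_le_sqrt
  simp only [lineProj, Matrix.mulVec, dotProduct, Fin.sum_univ_two, Matrix.of_apply,
    Matrix.cons_val_zero, Matrix.cons_val_one]
  have h := Real.sin_sq_add_cos_sq t
  have key : (Real.cos t * Real.cos t * v 0 + Real.cos t * Real.sin t * v 1) ^ 2 +
      (Real.sin t * Real.cos t * v 0 + Real.sin t * Real.sin t * v 1) ^ 2 =
      v 0 ^ 2 + v 1 ^ 2 - (Real.sin t * v 0 - Real.cos t * v 1) ^ 2 := by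
    linear_combination ((Real.cos t * v 0 + Real.sin t * v 1) ^ 2 + v 0 ^ 2 + v 1 ^ 2) * h
  rw [key]
  linarith [sq_nonneg (Real.sin t * v 0 - Real.cos t * v 1)]

theorem inQbar_lineProj (t : ℝ) : InQbar (lineProj t) := by
  constructor
  · have h : lineProj t = vecMulVec ![Real.cos t, Real.sin t] (star ![Real.cos t, Real.sin t]) := by
      ext i j
      fin_cases i <;> fin_cases j <;> simp [lineProj, vecMulVec_apply]
    rw [h]
    exact posSemidef_vecMulVec_self_star _
  · apply csSup_le
    · exact ⟨_, 0, by simp [eunorm], rfl⟩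
    · rintro c ⟨v, hv, rfl⟩
      exact (eunorm_lineProj_mulVec_le t v).trans hv

theorem hasDerivAt_drift_zero (t : ℝ) :
    HasDerivAt (fun s => drift s 0) (2 * (1 + Real.cos t) * Real.cos t) t := by
  have h := (((Real.hasDerivAt_sin t).const_mul 2).add (hasDerivAt_id t)).add
    ((Real.hasDerivAt_sin t).mul (Real.hasDerivAt_cos t))
  refine h.congr_deriv ?_
  linear_combination -Real.sin_sq_add_cos_sq t

theorem hasDerivAt_drift_one (t : ℝ) :
    HasDerivAt (fun s => drift s 1) (2 * (1 + Real.cos t) * Real.sin t) t := by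
  have h := ((Real.hasDerivAt_cos t).const_mul (-2)).add
    ((Real.hasDerivAt_sin t).mul (Real.hasDerivAt_sin t))
  refine h.congr_deriv ?_
  ring

theorem hasDerivAt_exp_neg (t : ℝ) :
    HasDerivAt (fun s => Real.exp (-s)) (-Real.exp (-t)) t := by
  simpa using (hasDerivAt_neg t).exp

theorem hasDerivAt_gap_zero (t : ℝ) :
    HasDerivAt (fun s => gap s 0) (4 * (1 + 2 * Real.exp (-t)) * Real.cos t) t := by
  have he := hasDerivAt_exp_neg t
  have h := (((he.mul (Real.hasDerivAt_cos t)).neg).add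
    ((he.const_add 1).mul (Real.hasDerivAt_sin t))).const_mul 4
  refine h.congr_deriv ?_
  ring

theorem hasDerivAt_gap_one (t : ℝ) :
    HasDerivAt (fun s => gap s 1) (4 * (1 + 2 * Real.exp (-t)) * Real.sin t) t := by
  have he := hasDerivAt_exp_neg t
  have h := (((he.mul (Real.hasDerivAt_sin t)).neg).sub
    ((he.const_add 1).mul (Real.hasDerivAt_cos t))).const_mul 4
  refine h.congr_deriv ?_
  ring

theorem cos_mul_gap_add_sin_mul_gap (t : ℝ) :
    Real.cos t * gap t 0 + Real.sin t * gap t 1 = -4 * Real.exp (-t) := by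
  simp only [gap, Matrix.cons_val_zero, Matrix.cons_val_one]
  linear_combination -4 * Real.exp (-t) * Real.sin_sq_add_cos_sq t

theorem twoNode_kronecker_lineProj_mulVec (a b t : ℝ) (y z : Fin 2 → ℝ) (k j : Fin 2) :
    ((twoNode a b ⊗ₖ lineProj t).mulVec fun i => ![y, fun l => y l - z l] i.1 i.2) (k, j) =
      ![-a, b] k * (Real.cos t * z 0 + Real.sin t * z 1) * ![Real.cos t, Real.sin t] j := by
  fin_cases k <;> fin_cases j <;>
    simp [twoNode, lineProj, Matrix.mulVec, dotProduct, Fintype.sum_prod_type,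
      Fin.sum_univ_two] <;> ring

theorem abs_le_eunorm {ι : Type*} [Fintype ι] (v : ι → ℝ) (i : ι) : |v i| ≤ eunorm v := by
  apply Real.abs_le_sqrt
  exact Finset.single_le_sum (f := fun j => v j ^ 2) (fun j _ => sq_nonneg _) (Finset.mem_univ i)

theorem sub_three_le_drift (t : ℝ) : t - 3 ≤ drift t 0 := by
  simp only [drift, Matrix.cons_val_zero]
  nlinarith [Real.neg_one_le_sin t, sq_nonneg (Real.sin t + Real.cos t),
    Real.sin_sq_add_cos_sq t]

theorem stmt8 :
    ∃ (p n : ℕ), 2 ≤ p ∧ 1 ≤ n ∧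
      ∃ (Γ : ℝ → Matrix (Fin p) (Fin p) ℝ) (Q : ℝ → Matrix (Fin n) (Fin n) ℝ)
        (x : ℝ → (Fin p × Fin n) → ℝ),
        (∀ t : ℝ, 0 ≤ t → IsInterconnection (Γ t)) ∧
        (∀ t : ℝ, 0 ≤ t → InQbar (Q t)) ∧
        (∀ t : ℝ, 0 ≤ t → ∀ i, HasDerivAt (fun s => x s i) (((Γ t ⊗ₖ Q t).mulVec (x t)) i) t) ∧
        (∀ M : ℝ, ∃ t : ℝ, 0 ≤ t ∧ M ≤ eunorm (x t)) := by
  refine ⟨2, 2, le_rfl, one_le_two,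
    fun t => twoNode (Real.exp t * (1 + Real.cos t) / 2) (2 + Real.exp t * (1 - Real.cos t) / 2),
    lineProj, fun t i => ![drift t, fun l => drift t l - gap t l] i.1 i.2, ?_, ?_, ?_, ?_⟩
  · intro t _
    have h₁ : 0 ≤ 1 + Real.cos t := by linarith [Real.neg_one_le_cos t]
    have h₂ : 0 ≤ 1 - Real.cos t := by linarith [Real.cos_le_one t]
    exact isInterconnection_twoNode (by positivity) (by positivity)
  · exact fun t _ => inQbar_lineProj t
  · rintro t - ⟨k, j⟩
    rw [twoNode_kronecker_lineProj_mulVec, cos_mul_gap_add_sin_mul_gap]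
    have he : Real.exp t * Real.exp (-t) = 1 := by rw [← Real.exp_add]; simp
    fin_cases k <;> fin_cases j
    · refine (hasDerivAt_drift_zero t).congr_deriv ?_
      simp only [Fin.zero_eta, Matrix.cons_val_zero]
      linear_combination -2 * (1 + Real.cos t) * Real.cos t * he
    · refine (hasDerivAt_drift_one t).congr_deriv ?_
      simp only [Fin.zero_eta, Fin.mk_one, Matrix.cons_val_zero, Matrix.cons_val_one]
      linear_combination -2 * (1 + Real.cos t) * Real.sin t * he
    · refine ((hasDerivAt_drift_zero t).sub (hasDerivAt_gap_zero t)).congr_deriv ?_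
      simp only [Fin.zero_eta, Fin.mk_one, Matrix.cons_val_zero, Matrix.cons_val_one]
      linear_combination 2 * (1 - Real.cos t) * Real.cos t * he
    · refine ((hasDerivAt_drift_one t).sub (hasDerivAt_gap_one t)).congr_deriv ?_
      simp only [Fin.mk_one, Matrix.cons_val_zero, Matrix.cons_val_one]
      linear_combination 2 * (1 - Real.cos t) * Real.sin t * he
  · intro M
    refine ⟨|M| + 3, by positivity, ?_⟩
    have h := abs_le_eunorm
      (fun i : Fin 2 × Fin 2 =>
        ![drift (|M| + 3), fun l => drift (|M| + 3) l - gap (|M| + 3) l] i.1 i.2) (0, 0)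
    refine le_trans ?_ h
    have h₁ := sub_three_le_drift (|M| + 3)
    refine le_trans ?_ (le_abs_self _)
    simp only [Matrix.cons_val_zero]
    linarith [le_abs_self M]
end
end
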